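/- FGN is a positive semidefinite under-approximation of the multiclass GGN (Proposition 1, item 1): for every logit vector z ∈ ℝ^C with C ≥ 2 and true class ⋆ and every matrix J_z ∈ ℝ^{C×d}, the matrices satisfy 0 ⪯ H^FGN ⪯ H^GGN in the Loewner order, where H^FGN = p_⋆ p_† J_s^T J_s and H^GGN = J_z^T(diag(p) − p p^T)J_z. -/

import Mathlib

/-!
A probability vector `p` is the mixture `p_⋆ e_⋆ + p_† ρ` of the point mass at the true class and
the conditional competitor distribution. Write `Cov p = diag p - p pᵀ`. Since `Cov e_⋆ = 0`, the law
of total covariance reads `Cov p = p_† Cov ρ + p_⋆ p_† (ρ - e_⋆) (ρ - e_⋆)ᵀ`, while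
`J_sᵀ = J_zᵀ (ρ - e_⋆)`. Conjugating by `J_z` shows that the gap between GGN and FGN is the
within-competitor part `p_† J_zᵀ (Cov ρ) J_z`.
-/

open Matrix

section Covariance

variable {R ι : Type*} [CommRing R] [DecidableEq ι]

/-- The covariance matrix of the one-hot encoding of a random class with distribution `p`. It is
defined for every vector `p`, normalized or not. -/
def categoricalCovariance (p : ι → R) : Matrix ι ι R :=
  diagonal p - vecMulVec p p

lemma categoricalCovariance_single (s : ι) :
    categoricalCovariance (Pi.single s 1 : ι → R) = 0 := by
  rw [categoricalCovariance, ← single_eq_single_vecMulVec_single, diagonal_single, sub_self]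

lemma categoricalCovariance_smul_add_smul {a b : R} (hab : a + b = 1) (μ ν : ι → R) :
    categoricalCovariance (a • μ + b • ν) =
      a • categoricalCovariance μ + b • categoricalCovariance ν +
        (a * b) • vecMulVec (ν - μ) (ν - μ) := by
  obtain rfl : b = 1 - a := eq_sub_of_add_eq' hab
  have hdiag : diagonal (a • μ + (1 - a) • ν) = a • diagonal μ + (1 - a) • diagonal ν := by
    rw [← diagonal_smul, ← diagonal_smul, diagonal_add]
    rfl
  simp only [categoricalCovariance, hdiag, add_vecMulVec, vecMulVec_add, smul_vecMulVec,
    vecMulVec_smul, sub_vecMulVec, vecMulVec_sub]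
  module

lemma categoricalCovariance_eq_within_add_between {s : ι} {p ρ : ι → R}
    (hp : p s • Pi.single s 1 + (1 - p s) • ρ = p) :
    categoricalCovariance p = (1 - p s) • categoricalCovariance ρ +
      (p s * (1 - p s)) • vecMulVec (ρ - Pi.single s 1) (ρ - Pi.single s 1) := by
  conv_lhs => rw [← hp, categoricalCovariance_smul_add_smul (add_sub_cancel (p s) 1),
    categoricalCovariance_single, smul_zero, zero_add]

variable [Fintype ι]

/- `1 - 1 νᵀ` subtracts the `ν`-mean from the rows of a matrix. The sum is normalized only after
multiplication by `b`, which leaves `ν` arbitrary when the mass `b` vanishes. -/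
lemma smul_categoricalCovariance_eq {b : R} {ν : ι → R} (hsum : b * ∑ c, ν c = b) :
    b • categoricalCovariance ν =
      (1 - vecMulVec 1 ν)ᵀ * diagonal (b • ν) * (1 - vecMulVec 1 ν) := by
  have hrow : 1 ᵥ* diagonal (b • ν) = b • ν := by
    ext c; rw [vecMul_diagonal, Pi.one_apply, one_mul]
  have hcol : diagonal (b • ν) *ᵥ 1 = b • ν := by
    ext c; rw [mulVec_diagonal, Pi.one_apply, mul_one]
  have hmass : (b • ν) ⬝ᵥ 1 = b := by rwa [smul_dotProduct, dotProduct_one, smul_eq_mul]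
  calc b • categoricalCovariance ν
      = diagonal (b • ν) - vecMulVec (b • ν) ν := by
        rw [categoricalCovariance, smul_sub, diagonal_smul, smul_vecMulVec]
    _ = (1 - vecMulVec 1 ν)ᵀ * (diagonal (b • ν) - vecMulVec (b • ν) ν) := by
        rw [transpose_sub, transpose_one, transpose_vecMulVec, Matrix.sub_mul, Matrix.one_mul,
          Matrix.mul_sub, vecMulVec_mul, vecMulVec_mul_vecMulVec, hrow, dotProduct_comm, hmass,
          vecMulVec_smul, smul_vecMulVec, sub_self, sub_zero]
    _ = (1 - vecMulVec 1 ν)ᵀ * diagonal (b • ν) * (1 - vecMulVec 1 ν) := by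
        rw [Matrix.mul_assoc, Matrix.mul_sub (diagonal _), Matrix.mul_one, mul_vecMulVec, hcol]

end Covariance

lemma transpose_mul_vecMulVec_mul {R m n : Type*} [CommRing R] [Fintype m] (v w : m → R)
    (J : Matrix m n R) : Jᵀ * vecMulVec v w * J = vecMulVec (v ᵥ* J) (w ᵥ* J) := by
  rw [mul_vecMulVec, vecMulVec_mul, mulVec_transpose]

section ExtendByZero

variable {R ι : Type*} [CommRing R] [DecidableEq ι] {s : ι}

lemma smul_extend_eq_update {p : ι → R} {q : R} {ρ : {c // c ≠ s} → R}
    (hρ : ∀ c : {c // c ≠ s}, p c = q * ρ c) :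
    q • Function.extend Subtype.val ρ 0 = Function.update p s 0 := by
  ext c
  rcases eq_or_ne c s with rfl | hc
  · simp
  · simp [hc, hρ ⟨c, hc⟩, Subtype.val_injective.extend_apply ρ 0 ⟨c, hc⟩]

lemma smul_single_add_update (p : ι → R) (s : ι) :
    p s • Pi.single s 1 + Function.update p s 0 = p := by
  ext c
  rcases eq_or_ne c s with rfl | hc
  · simp
  · simp [hc]

lemma extend_sub_single_vecMul [Fintype ι] {n : Type*} (ρ : {c // c ≠ s} → R)
    (J : Matrix ι n R) (j : n) :
    ((Function.extend Subtype.val ρ 0 - Pi.single s 1) ᵥ* J) j =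
      -J s j + ∑ c : {c // c ≠ s}, ρ c * J c j := by
  have hext : (Function.extend Subtype.val ρ 0 ᵥ* J) j = ∑ c : {c // c ≠ s}, ρ c * J c j := by
    simp [vecMul, dotProduct, Fintype.sum_eq_add_sum_subtype_ne _ s]
  rw [sub_vecMul, Pi.sub_apply, hext, single_one_vecMul, row_apply, sub_eq_neg_add]

end ExtendByZero

section StarOrderedRing

variable {R ι n : Type*} [CommRing R] [PartialOrder R] [StarRing R] [StarOrderedRing R]
  [TrivialStar R]

lemma posSemidef_smul_vecMulVec_self [Finite n] {a : R} (ha : 0 ≤ a) (v : n → R) :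
    (a • vecMulVec v v).PosSemidef := by
  have := Fintype.ofFinite n
  simpa only [star_trivial] using (posSemidef_vecMulVec_self_star v).smul ha

variable [Fintype ι] [DecidableEq ι]

lemma posSemidef_smul_categoricalCovariance {b : R} {ν : ι → R} (hν : 0 ≤ b • ν)
    (hsum : b * ∑ c, ν c = b) : (b • categoricalCovariance ν).PosSemidef := by
  rw [smul_categoricalCovariance_eq hsum, ← conjTranspose_eq_transpose_of_trivial]
  exact (PosSemidef.diagonal hν).conjTranspose_mul_mul_same _

theorem fgn_psd_under_approximation_general [Finite n] {s : ι} {p : ι → R}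
    (hp : p ∈ stdSimplex R ι) {ρ : {c // c ≠ s} → R}
    (hρ : ∀ c : {c // c ≠ s}, p c = (1 - p s) * ρ c) (J : Matrix ι n R) {Js : n → R}
    (hJs : ∀ j, Js j = -J s j + ∑ c : {c // c ≠ s}, ρ c * J c j) :
    ((p s * (1 - p s)) • vecMulVec Js Js).PosSemidef ∧
      (Jᵀ * categoricalCovariance p * J - (p s * (1 - p s)) • vecMulVec Js Js).PosSemidef := by
  have hps : p s ∈ Set.Icc 0 1 := mem_Icc_of_mem_stdSimplex hp s
  refine ⟨posSemidef_smul_vecMulVec_self (smul_nonneg hps.1 (sub_nonneg.2 hps.2)) Js, ?_⟩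
  let ν : ι → R := Function.extend Subtype.val ρ 0
  have hν : (1 - p s) • ν = Function.update p s 0 := smul_extend_eq_update hρ
  have hmix : p s • Pi.single s 1 + (1 - p s) • ν = p := by rw [hν, smul_single_add_update]
  have hnonneg : 0 ≤ (1 - p s) • ν := hν ▸ le_update_iff.2 ⟨le_rfl, fun c _ ↦ hp.1 c⟩
  have hsum : (1 - p s) * ∑ c, ν c = 1 - p s := by
    have hone : ∑ c, (p s • Pi.single s 1 + (1 - p s) • ν : ι → R) c = 1 := by rw [hmix, hp.2]
    simpa [Finset.sum_add_distrib, ← Finset.mul_sum, ← eq_sub_iff_add_eq'] using hone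
  have hJs_eq : Js = (ν - Pi.single s 1) ᵥ* J :=
    funext fun j ↦ (hJs j).trans (extend_sub_single_vecMul ρ J j).symm
  have hgap : Jᵀ * categoricalCovariance p * J - (p s * (1 - p s)) • vecMulVec Js Js =
      Jᴴ * ((1 - p s) • categoricalCovariance ν) * J := by
    rw [conjTranspose_eq_transpose_of_trivial, hJs_eq, ← transpose_mul_vecMulVec_mul,
      categoricalCovariance_eq_within_add_between hmix, Matrix.mul_add, Matrix.add_mul,
      Matrix.mul_smul _ (p s * (1 - p s)), Matrix.smul_mul (p s * (1 - p s)), add_sub_cancel_right]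
  rw [hgap]
  exact (posSemidef_smul_categoricalCovariance hnonneg hsum).conjTranspose_mul_mul_same J

end StarOrderedRing

section Softmax

variable {ι : Type*} [Fintype ι]

/-- The softmax probabilities of the logits `z`. -/
noncomputable def softmax (z : ι → ℝ) (c : ι) : ℝ :=
  Real.exp (z c) / ∑ j, Real.exp (z j)

lemma softmax_pos (z : ι → ℝ) (c : ι) : 0 < softmax z c :=
  div_pos (Real.exp_pos _) (Finset.sum_pos (fun _ _ ↦ Real.exp_pos _) ⟨c, Finset.mem_univ c⟩)

lemma softmax_mem_stdSimplex [Nonempty ι] (z : ι → ℝ) : softmax z ∈ stdSimplex ℝ ι := by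
  have hZ : 0 < ∑ j, Real.exp (z j) :=
    Finset.sum_pos (fun _ _ ↦ Real.exp_pos _) Finset.univ_nonempty
  exact ⟨fun c ↦ (softmax_pos z c).le, by simp only [softmax, ← Finset.sum_div, div_self hZ.ne']⟩

lemma softmax_lt_one [Nontrivial ι] (z : ι → ℝ) (c : ι) : softmax z c < 1 := by
  obtain ⟨c', hc'⟩ := exists_ne c
  rw [← (softmax_mem_stdSimplex z).2]
  exact Finset.single_lt_sum hc' (Finset.mem_univ c) (Finset.mem_univ c') (softmax_pos z c')
    fun k _ _ ↦ (softmax_pos z k).le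

end Softmax

/-- Proposition 1, item 1: FGN is a PSD under-approximation of the multiclass
GGN, i.e. `0 ⪯ H^FGN ⪯ H^GGN` in the Loewner order, where
`H^FGN = p_⋆ p_† Jsᵀ Js` and `H^GGN = Jzᵀ (diag p - p pᵀ) Jz`. -/
theorem fgn_psd_under_approximation
    (C d : ℕ) (hC : 2 ≤ C) (star : Fin C) (z : Fin C → ℝ)
    (p : Fin C → ℝ) (hp : ∀ c, p c = Real.exp (z c) / ∑ j, Real.exp (z j))
    (pdag : ℝ) (hpdag : pdag = 1 - p star)
    (ρ : {c : Fin C // c ≠ star} → ℝ) (hρ : ∀ j, ρ j = p j / pdag)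
    (Jz : Matrix (Fin C) (Fin d) ℝ)
    (Js : Fin d → ℝ)
    (hJs : ∀ j, Js j = -Jz star j + ∑ c : {c : Fin C // c ≠ star}, ρ c * Jz c j) :
    ((p star * pdag) • Matrix.vecMulVec Js Js).PosSemidef ∧
    (Jz.transpose * (Matrix.diagonal p - Matrix.vecMulVec p p) * Jz
      - (p star * pdag) • Matrix.vecMulVec Js Js).PosSemidef := by
  obtain rfl : p = softmax z := funext hp
  subst hpdag
  have : Nontrivial (Fin C) := Fin.nontrivial_iff_two_le.mpr hC
  have hpdag : 1 - softmax z star ≠ 0 := (sub_pos.2 (softmax_lt_one z star)).ne'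
  exact fgn_psd_under_approximation_general (softmax_mem_stdSimplex z)
    (fun c ↦ by rw [hρ, mul_div_cancel₀ _ hpdag]) Jz hJs
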